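/- arXiv:2210.03447 — 2 statements merged into one kernel-verified Lean document; each statement's English description precedes it below -/
import Mathlib

section
/- The functions W, ∂W/∂r, and ∂²W/∂r² are all strictly positive at every point of the open rectangle D₁ = (0,1) × (0,π/2). -/
/-!
In the second derivative the denominators cancel: with `r = e^{-t/4}` and `φ = 2θ`,
`r² ∂²W/∂r² = (16/π) ∑ₙ (2n+1) e^{-(2n+1)² t} sin((2n+1)φ)`, a derivative of a Jacobi theta
function. Once this is positive for `t > 0`, `0 < φ < π` (`theta_pos`), positivity of `∂W/∂r` and
then of `W` follows by integrating in `r`, since both series vanish at `r = 0`.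

Positivity of the theta series is proved in two overlapping regimes. For `t > 2/5` the term `n = 0`
dominates, because `|sin((2n+1)φ)| ≤ (2n+1) sin φ` (`theta_pos_of_large`). For `t ≤ 2/5`, the
symmetry `φ ↦ π - φ` reduces to `φ ≤ π/2`; with `φ = 2πa` the functional equation of the odd heat
kernel gives, up to a positive factor, `∑_{k ∈ ℤ} (h(k + a) - h(k + a + 1/2))` with
`h(y) = y e^{-b y²}` and `b = π²/t ≥ 24`. Folding this sum onto `ℕ` using that `h` is odd leaves
`h(a) > 0` plus terms that are nonnegative by convexity of `h` on `[1/4, ∞)`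
(`oddKernel_sub_pos`).
-/

open Real Set Topology Filter

/-- `mIdx n = 4(n+1) - 2 = 4n + 2`, the odd-indexed frequencies `2, 6, 10, …`. -/
def mIdx (n : ℕ) : ℕ := 4 * n + 2

/-- `W(r,θ) = (8/π) ∑_{n≥1} r^{mₙ²} sin(mₙ θ) / ((mₙ² − 1) mₙ)` with `mₙ = 4n − 2`. -/
noncomputable def W (r θ : ℝ) : ℝ :=
  (8 / π) * ∑' n : ℕ,
    r ^ (mIdx n ^ 2) * Real.sin ((mIdx n : ℝ) * θ) / (((mIdx n : ℝ) ^ 2 - 1) * (mIdx n : ℝ))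

/-! ### The odd heat kernel -/

/-- The odd Gaussian profile `y e^{-b y²}`, the summand of the odd heat kernel on the line. -/
noncomputable def oddGauss (b y : ℝ) : ℝ := y * Real.exp (-b * y ^ 2)

lemma oddGauss_neg (b y : ℝ) : oddGauss b (-y) = -oddGauss b y := by
  simp [oddGauss]

/-- `oddGauss b` is convex beyond its inflection point `√(3/(2b))`, which is at most `1/4` when
`24 ≤ b`. -/
lemma convexOn_oddGauss {b : ℝ} (hb : 24 ≤ b) : ConvexOn ℝ (Ici (1 / 4 : ℝ)) (oddGauss b) := by
  have hE (x : ℝ) : HasDerivAt (fun y => Real.exp (-b * y ^ 2))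
      (Real.exp (-b * x ^ 2) * (-b * (2 * x))) x := by
    have := ((hasDerivAt_pow 2 x).const_mul (-b)).exp
    simpa using this
  have h1 (x : ℝ) : HasDerivAt (oddGauss b)
      ((1 - 2 * b * x ^ 2) * Real.exp (-b * x ^ 2)) x := by
    have := (hasDerivAt_id x).mul (hE x)
    convert! this using 1
    simp only [id]
    ring
  have h2 (x : ℝ) : HasDerivAt (fun y => (1 - 2 * b * y ^ 2) * Real.exp (-b * y ^ 2))
      (2 * b * x * (2 * b * x ^ 2 - 3) * Real.exp (-b * x ^ 2)) x := by
    have := ((((hasDerivAt_pow 2 x).const_mul (2 * b)).const_sub 1)).mul (hE x)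
    convert! this using 1
    push_cast
    ring
  refine convexOn_of_hasDerivWithinAt2_nonneg (convex_Ici _)
    (fun x _ => (h1 x).continuousAt.continuousWithinAt)
    (fun x _ => (h1 x).hasDerivWithinAt) (fun x _ => (h2 x).hasDerivWithinAt) ?_
  intro x hx
  rw [interior_Ici] at hx
  have hx : (1 / 4 : ℝ) < x := hx
  have : 3 ≤ 2 * b * x ^ 2 := by nlinarith
  have h0 : 0 ≤ 2 * b * x ^ 2 - 3 := by linarith
  have : 0 ≤ 2 * b * x := by nlinarith
  positivity

/-- The two outer points `c - a`, `c + 1/2 + a` majorize the inner ones. -/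
lemma oddGauss_majorize {a b c : ℝ} (hb : 24 ≤ b) (ha : 0 < a) (hc : 1 / 4 ≤ c - a) :
    oddGauss b (c + 1 / 2 - a) + oddGauss b (c + a)
      ≤ oddGauss b (c - a) + oddGauss b (c + 1 / 2 + a) := by
  have hconv := convexOn_oddGauss hb
  have hx : c - a ∈ Ici (1 / 4 : ℝ) := hc
  have hy : c + 1 / 2 + a ∈ Ici (1 / 4 : ℝ) := by simp only [mem_Ici]; linarith
  have hpos : 0 < 1 / 2 + 2 * a := by linarith
  set l : ℝ := 2 * a / (1 / 2 + 2 * a) with hl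
  set k : ℝ := (1 / 2) / (1 / 2 + 2 * a) with hk
  have hl0 : 0 ≤ l := by positivity
  have hk0 : 0 ≤ k := by positivity
  have hlk : l + k = 1 := by rw [hl, hk]; field_simp; ring
  have hla : l * (1 / 2 + 2 * a) = 2 * a := by rw [hl]; field_simp
  have e1 := hconv.2 hx hy hl0 hk0 hlk
  have e2 := hconv.2 hx hy hk0 hl0 (by linarith)
  simp only [smul_eq_mul] at e1 e2
  have hk' : k = 1 - l := by linarith
  rw [show l * (c - a) + k * (c + 1 / 2 + a) = c + 1 / 2 - a by rw [hk']; linarith] at e1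
  rw [show k * (c - a) + l * (c + 1 / 2 + a) = c + a by rw [hk']; linarith] at e2
  rw [hk'] at e1 e2
  linarith

/-- The odd heat kernel at `a` dominates its translate by half a period. Folding both sums over
`ℤ` onto `ℕ` isolates the strictly positive term `oddGauss b a`; the remaining terms pair off into
second differences of a convex function. -/
lemma oddKernel_sub_pos {a x : ℝ} (ha : 0 < a) (ha' : a ≤ 1 / 4) (hx : 24 ≤ π * x) :
    0 < HurwitzZeta.oddKernel (a : UnitAddCircle) x
      - HurwitzZeta.oddKernel ((a + 1 / 2 : ℝ) : UnitAddCircle) x := by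
  have hx0 : 0 < x := by
    by_contra h
    nlinarith [Real.pi_pos]
  have conv (y : ℝ) : y * Real.exp (-π * y ^ 2 * x) = oddGauss (π * x) y := by
    rw [oddGauss]; congr 2; ring
  have h1 := HurwitzZeta.hasSum_int_oddKernel a hx0
  have h2 := HurwitzZeta.hasSum_int_oddKernel (a + 1 / 2) hx0
  simp only [conv] at h1 h2
  generalize hA : HurwitzZeta.oddKernel (a : UnitAddCircle) x = A at *
  generalize hB : HurwitzZeta.oddKernel ((a + 1 / 2 : ℝ) : UnitAddCircle) x = B at *
  have h1' := (hasSum_nat_add_iff' 1).mpr h1.nat_add_neg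
  have h2' := h2.nat_add_neg_add_one
  have h3 := h1'.sub h2'
  have ha0 : 0 < oddGauss (π * x) a := by rw [oddGauss]; positivity
  have : 0 ≤ A + oddGauss (π * x) a - (oddGauss (π * x) a + oddGauss (π * x) a) - B := by
    have h4 := h3.nonneg (fun n => ?_)
    · simpa using h4
    · have hn : (0 : ℝ) ≤ n := n.cast_nonneg
      have key := oddGauss_majorize (c := n + 1 / 2) hx ha (by linarith)
      have e1 := oddGauss_neg (π * x) (n + 1 - a)
      have e2 := oddGauss_neg (π * x) (n + 1 / 2 - a)
      push_cast
      rw [show -((n : ℝ) + 1) + a = -(n + 1 - a) by ring,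
        show -((n : ℝ) + 1) + (a + 1 / 2) = -(n + 1 / 2 - a) by ring, e1, e2,
        show (n : ℝ) + (a + 1 / 2) = n + 1 / 2 + a by ring]
      rw [show (n : ℝ) + 1 / 2 + 1 / 2 - a = n + 1 - a by ring,
        show (n : ℝ) + 1 / 2 + 1 / 2 + a = n + 1 + a by ring] at key
      linarith
  linarith

/-! ### Positivity of the theta series -/

/-- The `n`-th term of the odd-frequency theta series `∑ (2n+1) e^{-(2n+1)² t} sin((2n+1)φ)`. -/
noncomputable def thetaTerm (t φ : ℝ) (n : ℕ) : ℝ :=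
  (2 * n + 1) * Real.exp (-(2 * n + 1) ^ 2 * t) * Real.sin ((2 * n + 1) * φ)

/-- For small times, Jacobi's functional equation turns the series into a difference of odd heat
kernels at large time. -/
lemma theta_pos_of_small {t φ : ℝ} (ht : 0 < t) (ht' : t ≤ 2 / 5) (hφ : 0 < φ)
    (hφ' : φ ≤ π / 2) : 0 < ∑' n, thetaTerm t φ n := by
  have hπ := Real.pi_pos
  obtain ⟨a, rfl⟩ : ∃ a, φ = 2 * π * a := ⟨φ / (2 * π), by field_simp⟩
  have ha : 0 < a := by
    by_contra h
    nlinarith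
  have ha' : a ≤ 1 / 4 := by
    by_contra h
    nlinarith
  set s : ℝ := t / π with hs
  have hs0 : 0 < s := by positivity
  have hx : 24 ≤ π * (1 / s) := by
    rw [hs, one_div_div, ← mul_div_assoc, le_div_iff₀ ht]
    nlinarith [Real.pi_gt_d2]
  have key := oddKernel_sub_pos ha ha' hx
  rw [HurwitzZeta.oddKernel_functional_equation, HurwitzZeta.oddKernel_functional_equation,
    one_div_one_div, ← mul_sub] at key
  have key2 := pos_of_mul_pos_right key (by positivity)
  have h := (HurwitzZeta.hasSum_nat_sinKernel a hs0).sub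
    (HurwitzZeta.hasSum_nat_sinKernel (a + 1 / 2) hs0)
  have hshift (n : ℕ) : Real.sin (2 * π * (a + 1 / 2) * n)
      = (-1) ^ n * Real.sin (2 * π * a * n) := by
    rw [← Real.sin_add_nat_mul_pi]; congr 1; ring
  simp only [hshift] at h
  have hinj : Function.Injective (fun n : ℕ => 2 * n + 1) := fun m n h => by
    simp only at h; omega
  rw [← hinj.hasSum_iff] at h
  · have h4 : HasSum (fun n => 4 * thetaTerm t (2 * π * a) n)
        (HurwitzZeta.sinKernel (a : UnitAddCircle) s
          - HurwitzZeta.sinKernel ((a + 1 / 2 : ℝ) : UnitAddCircle) s) := by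
      refine h.congr_fun fun n => ?_
      simp only [Function.comp, thetaTerm]
      have : Real.exp (-(2 * (n : ℝ) + 1) ^ 2 * t)
          = Real.exp (-π * (2 * (n : ℝ) + 1) ^ 2 * s) := by
        rw [hs]; congr 1; field_simp
      rw [this, Odd.neg_one_pow ⟨n, rfl⟩]
      push_cast
      rw [show (2 * (n : ℝ) + 1) * (2 * π * a) = 2 * π * a * (2 * n + 1) by ring]
      ring
    have h5 := h4.tsum_eq
    rw [tsum_mul_left] at h5
    linarith
  · intro n hn
    have : Even n := by
      by_contra h
      obtain ⟨k, hk⟩ := Nat.not_even_iff_odd.mp h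
      exact hn ⟨k, hk.symm⟩
    rw [this.neg_one_pow]
    ring

lemma abs_sin_natMul_le (n : ℕ) (x : ℝ) : |Real.sin (n * x)| ≤ n * |Real.sin x| := by
  induction n with
  | zero => simp
  | succ n ih =>
    push_cast
    rw [add_mul, one_mul, Real.sin_add]
    calc _ ≤ |Real.sin (n * x) * Real.cos x| + |Real.cos (n * x) * Real.sin x| := abs_add_le _ _
      _ ≤ |Real.sin (n * x)| * 1 + 1 * |Real.sin x| := by
        rw [abs_mul, abs_mul]
        gcongr
        · exact Real.abs_cos_le_one _
        · exact Real.abs_cos_le_one _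
      _ ≤ _ := by linarith

lemma sq_le_nine_pow (n : ℕ) : (2 * ((n : ℝ) + 1) + 1) ^ 2 ≤ 9 ^ (n + 1) := by
  induction n with
  | zero => norm_num
  | succ n ih =>
    rw [pow_succ 9 (n + 1)]
    push_cast
    nlinarith [(n.cast_nonneg : (0 : ℝ) ≤ n)]

/-- For large times the first term of the series dominates all the others, by comparison with a
geometric series of ratio less than `1/2`. -/
lemma theta_pos_of_large {t φ : ℝ} (ht : 2 / 5 < t) (hφ : 0 < φ) (hφ' : φ < π) :
    0 < ∑' n, thetaTerm t φ n := by
  have hsin := Real.sin_pos_of_pos_of_lt_pi hφ hφ'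
  set x : ℝ := Real.exp (-(8 * t)) with hx
  have hx0 : 0 < x := Real.exp_pos _
  have hx1 : x < 1 / 18 := by
    have h1 : x ≤ Real.exp (-3) := Real.exp_le_exp.mpr (by linarith)
    have h2 : (18 : ℝ) < Real.exp 3 := by
      have : Real.exp 3 = Real.exp 1 ^ 3 := by rw [← Real.exp_nat_mul]; norm_num
      rw [this]
      calc (18 : ℝ) < 2.7 ^ 3 := by norm_num
        _ ≤ _ := by
          gcongr
          linarith [Real.exp_one_gt_d9]
    rw [Real.exp_neg] at h1
    have h3 : (Real.exp 3)⁻¹ < 1 / 18 := by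
      rw [one_div]; exact inv_strictAnti₀ (by norm_num) h2
    linarith
  set A : ℝ := Real.exp (-t) * Real.sin φ with hA
  have hA0 : 0 < A := by positivity
  have hbound (n : ℕ) : |thetaTerm t φ (n + 1)| ≤ A * (9 * x) * (9 * x) ^ n := by
    have e1 : |Real.sin ((2 * ((n : ℝ) + 1) + 1) * φ)| ≤ (2 * ((n : ℝ) + 1) + 1) * Real.sin φ := by
      have := abs_sin_natMul_le (2 * (n + 1) + 1) φ
      rw [abs_of_pos hsin] at this
      exact_mod_cast this
    have e2 : Real.exp (-(2 * ((n : ℝ) + 1) + 1) ^ 2 * t) ≤ Real.exp (-t) * x ^ (n + 1) := by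
      rw [hx, ← Real.exp_nat_mul, ← Real.exp_add]
      apply Real.exp_le_exp.mpr
      push_cast
      have : 0 ≤ (n : ℝ) * (n + 1) * t := by positivity
      nlinarith
    have e3 := sq_le_nine_pow n
    rw [thetaTerm, abs_mul, abs_of_nonneg (by positivity)]
    push_cast
    calc _ ≤ (2 * ((n : ℝ) + 1) + 1) * (Real.exp (-t) * x ^ (n + 1))
          * ((2 * ((n : ℝ) + 1) + 1) * Real.sin φ) := by gcongr
      _ = A * x ^ (n + 1) * (2 * ((n : ℝ) + 1) + 1) ^ 2 := by rw [hA]; ring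
      _ ≤ A * x ^ (n + 1) * 9 ^ (n + 1) := by gcongr
      _ = _ := by rw [mul_assoc A, ← mul_pow, mul_comm x]; ring
  have hgeo : HasSum (fun n : ℕ => A * (9 * x) * (9 * x) ^ n) (A * (9 * x) * (1 - 9 * x)⁻¹) :=
    (hasSum_geometric_of_lt_one (by positivity) (by linarith)).mul_left _
  have hsum1 : Summable fun n => thetaTerm t φ (n + 1) :=
    Summable.of_norm_bounded hgeo.summable hbound
  have hsum : Summable (thetaTerm t φ) := (summable_nat_add_iff 1).mp hsum1
  have htail : |∑' n, thetaTerm t φ (n + 1)| ≤ A * (9 * x) * (1 - 9 * x)⁻¹ :=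
    tsum_of_norm_bounded (f := fun n => thetaTerm t φ (n + 1)) hgeo hbound
  have hlt : A * (9 * x) * (1 - 9 * x)⁻¹ < A := by
    rw [← div_eq_mul_inv, div_lt_iff₀ (by linarith)]
    nlinarith
  rw [hsum.tsum_eq_zero_add]
  have h0 : thetaTerm t φ 0 = A := by simp [thetaTerm, hA]
  rw [h0]
  linarith [neg_abs_le (∑' n, thetaTerm t φ (n + 1))]

lemma thetaTerm_reflect (t φ : ℝ) (n : ℕ) : thetaTerm t (π - φ) n = thetaTerm t φ n := by
  have : Real.sin ((2 * n + 1) * (π - φ)) = Real.sin ((2 * n + 1) * φ) := by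
    rw [show (2 * (n : ℝ) + 1) * (π - φ) = π - (2 * n + 1) * φ + n * (2 * π) by ring,
      Real.sin_add_nat_mul_two_pi, Real.sin_pi_sub]
  rw [thetaTerm, thetaTerm, this]

lemma theta_pos {t φ : ℝ} (ht : 0 < t) (hφ : 0 < φ) (hφ' : φ < π) :
    0 < ∑' n, thetaTerm t φ n := by
  rcases lt_or_ge (2 / 5) t with h | h
  · exact theta_pos_of_large h hφ hφ'
  rcases le_total φ (π / 2) with h' | h'
  · exact theta_pos_of_small ht h hφ h'
  · simp_rw [← thetaTerm_reflect t φ]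
    exact theta_pos_of_small ht h (by linarith) (by linarith)

/-! ### Termwise differentiation and integration in `r` -/

lemma two_le_mIdx (n : ℕ) : 2 ≤ mIdx n := by unfold mIdx; omega

lemma mIdx_injective : Function.Injective mIdx := fun m n h => by
  unfold mIdx at h; omega

/-- Termwise differentiation on `(-1, 1)` of a power series supported on sparse exponents lying
between `mₙ + 1` and `mₙ²`, with coefficients growing at most linearly in `mₙ`. -/
lemma hasDerivAt_series {c : ℕ → ℝ} {e : ℕ → ℕ} (hc : ∀ n, |c n| ≤ mIdx n)
    (he : ∀ n, mIdx n + 1 ≤ e n) (he' : ∀ n, e n ≤ mIdx n ^ 2) {r : ℝ} (hr : |r| < 1) :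
    HasDerivAt (fun s => ∑' n, s ^ e n * c n) (∑' n, r ^ (e n - 1) * (e n * c n)) r := by
  obtain ⟨ρ, hrρ, hρ1⟩ := exists_between hr
  have hρ0 : 0 < ρ := (abs_nonneg r).trans_lt hrρ
  have hu : Summable fun n => (mIdx n : ℝ) ^ 3 * ρ ^ mIdx n :=
    (summable_pow_mul_geometric_of_norm_lt_one 3
      (by rwa [Real.norm_of_nonneg hρ0.le] : ‖ρ‖ < 1)).comp_injective mIdx_injective
  have h0 : (0 : ℝ) ∈ Ioo (-ρ) ρ := ⟨by linarith, hρ0⟩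
  have hrm : r ∈ Ioo (-ρ) ρ := abs_lt.mp hrρ
  refine hasDerivAt_tsum_of_isPreconnected hu isOpen_Ioo isPreconnected_Ioo
    (g := fun n s => s ^ e n * c n) (g' := fun n s => s ^ (e n - 1) * (e n * c n)) ?_ ?_ h0 ?_ hrm
  · intro n y _
    have := (hasDerivAt_pow (e n) y).mul_const (c n)
    convert! this using 1
    ring
  · intro n y hy
    have hy' : |y| ≤ ρ := (abs_lt.mpr hy).le
    rw [Real.norm_eq_abs, abs_mul, abs_mul, abs_pow, Nat.abs_cast]
    have e1 : |y| ^ (e n - 1) ≤ ρ ^ mIdx n :=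
      (pow_le_pow_left₀ (abs_nonneg y) hy' _).trans
        (pow_le_pow_of_le_one hρ0.le hρ1.le (by have := he n; omega))
    have e2 : (e n : ℝ) ≤ (mIdx n : ℝ) ^ 2 := by exact_mod_cast he' n
    calc _ ≤ ρ ^ mIdx n * ((mIdx n : ℝ) ^ 2 * mIdx n) := by
          gcongr
          exact hc n
      _ = _ := by ring
  · convert! summable_zero using 2 with n
    rw [zero_pow (by have := he n; omega), zero_mul]

/-- Coefficient of `r^{mₙ²}` in `(π/8) W(r, θ)`. -/
noncomputable def wCoeff (θ : ℝ) (n : ℕ) : ℝ :=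
  Real.sin ((mIdx n : ℝ) * θ) / (((mIdx n : ℝ) ^ 2 - 1) * (mIdx n : ℝ))

lemma wCoeff_mul (θ : ℝ) (n : ℕ) :
    ((mIdx n : ℝ) ^ 2 - 1) * (mIdx n * wCoeff θ n) = Real.sin (mIdx n * θ) := by
  have h2 : (2 : ℝ) ≤ mIdx n := by exact_mod_cast two_le_mIdx n
  have : (mIdx n : ℝ) ^ 2 - 1 ≠ 0 := by nlinarith
  rw [wCoeff]
  field_simp

lemma abs_mIdx_sq_mul_wCoeff_le (θ : ℝ) (n : ℕ) :
    |(mIdx n : ℝ) ^ 2 * wCoeff θ n| ≤ mIdx n := by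
  have h2 : (2 : ℝ) ≤ mIdx n := by exact_mod_cast two_le_mIdx n
  have h1 : (1 : ℝ) ≤ (mIdx n : ℝ) ^ 2 - 1 := by nlinarith
  have h3 : |(mIdx n : ℝ) ^ 2 - 1| * |mIdx n * wCoeff θ n| ≤ 1 := by
    rw [← abs_mul, wCoeff_mul]
    exact Real.abs_sin_le_one _
  rw [abs_of_pos (by linarith)] at h3
  have h4 : |mIdx n * wCoeff θ n| ≤ 1 := by
    nlinarith [abs_nonneg (mIdx n * wCoeff θ n)]
  rw [pow_two, mul_assoc, abs_mul, Nat.abs_cast]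
  nlinarith

lemma abs_wCoeff_le (θ : ℝ) (n : ℕ) : |wCoeff θ n| ≤ mIdx n := by
  have h2 : (2 : ℝ) ≤ mIdx n := by exact_mod_cast two_le_mIdx n
  have := abs_mIdx_sq_mul_wCoeff_le θ n
  rw [abs_mul, abs_of_nonneg (by positivity)] at this
  have h1 : (1 : ℝ) ≤ (mIdx n : ℝ) ^ 2 := by nlinarith
  nlinarith [abs_nonneg (wCoeff θ n)]

/-- The series for `∂W/∂r`. -/
noncomputable def W₁ (r θ : ℝ) : ℝ :=
  (8 / π) * ∑' n, r ^ (mIdx n ^ 2 - 1) * ((mIdx n : ℝ) ^ 2 * wCoeff θ n)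

/-- The series for `∂²W/∂r²`. -/
noncomputable def W₂ (r θ : ℝ) : ℝ :=
  (8 / π) * ∑' n, r ^ (mIdx n ^ 2 - 2) * ((mIdx n : ℝ) * Real.sin (mIdx n * θ))

lemma W_eq (θ : ℝ) : (fun s => W s θ) = fun s => (8 / π) * ∑' n, s ^ (mIdx n ^ 2) * wCoeff θ n := by
  funext s
  simp only [W, wCoeff, mul_div_assoc]

lemma hasDerivAt_W {r : ℝ} (θ : ℝ) (hr : |r| < 1) : HasDerivAt (fun s => W s θ) (W₁ r θ) r := by
  rw [W_eq]
  have := (hasDerivAt_series (abs_wCoeff_le θ) (e := fun n => mIdx n ^ 2)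
    (fun n => by have := two_le_mIdx n; nlinarith) (fun n => le_rfl) hr).const_mul (8 / π)
  convert! this using 1
  simp only [W₁]
  push_cast
  rfl

lemma hasDerivAt_W₁ {r : ℝ} (θ : ℝ) (hr : |r| < 1) :
    HasDerivAt (fun s => W₁ s θ) (W₂ r θ) r := by
  have hsq (n : ℕ) : mIdx n + 2 ≤ mIdx n ^ 2 := by have := two_le_mIdx n; nlinarith
  have := (hasDerivAt_series (abs_mIdx_sq_mul_wCoeff_le θ) (e := fun n => mIdx n ^ 2 - 1)
    (fun n => by have := hsq n; omega) (fun n => Nat.sub_le _ _) hr).const_mul (8 / π)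
  convert! this using 1
  simp only [W₂]
  congr 2
  funext n
  rw [← wCoeff_mul, Nat.cast_sub (by have := hsq n; omega), Nat.sub_sub]
  push_cast
  ring

/-- With `r = e^{-t/4}` the exponents `mₙ² = 4(2n+1)²` turn `r² ∂²W/∂r²` into the theta series. -/
lemma W₂_pos {r θ : ℝ} (hr : r ∈ Ioo (0 : ℝ) 1) (hθ : θ ∈ Ioo (0 : ℝ) (π / 2)) :
    0 < W₂ r θ := by
  obtain ⟨hr0, hr1⟩ := hr
  have hπ := Real.pi_pos
  have ht : 0 < -4 * Real.log r := by linarith [Real.log_neg hr0 hr1]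
  have key := theta_pos (φ := 2 * θ) ht (by linarith [hθ.1]) (by linarith [hθ.2])
  have hterm (n : ℕ) : r ^ (mIdx n ^ 2 - 2) * ((mIdx n : ℝ) * Real.sin (mIdx n * θ))
      = 2 / r ^ 2 * thetaTerm (-4 * Real.log r) (2 * θ) n := by
    have h2 : 2 ≤ mIdx n ^ 2 := by have := two_le_mIdx n; nlinarith
    have e1 : r ^ (mIdx n ^ 2) = Real.exp (-(2 * (n : ℝ) + 1) ^ 2 * (-4 * Real.log r)) := by
      rw [← Real.rpow_natCast, Real.rpow_def_of_pos hr0]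
      congr 1
      simp only [mIdx]
      push_cast
      ring
    rw [thetaTerm, ← e1, ← Nat.sub_add_cancel h2, pow_add, Nat.add_sub_cancel]
    have e2 : (mIdx n : ℝ) = 2 * (2 * n + 1) := by simp only [mIdx]; push_cast; ring
    rw [e2, show (2 * (n : ℝ) + 1) * (2 * θ) = 2 * (2 * n + 1) * θ by ring]
    field_simp
  rw [W₂]
  simp_rw [hterm]
  rw [tsum_mul_left]
  positivity

/-- A function vanishing at `0` with positive derivative on `(0, 1)` is positive there. -/
lemma pos_of_hasDerivAt_pos {f f' : ℝ → ℝ} (h0 : f 0 = 0)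
    (hf : ∀ r, |r| < 1 → HasDerivAt f (f' r) r) (hf' : ∀ r ∈ Ioo (0 : ℝ) 1, 0 < f' r)
    {r : ℝ} (hr : r ∈ Ioo (0 : ℝ) 1) : 0 < f r := by
  have habs {y : ℝ} (hy : y ∈ Icc 0 r) : |y| < 1 := by
    rw [abs_of_nonneg hy.1]; exact hy.2.trans_lt hr.2
  have hmono : StrictMonoOn f (Icc 0 r) := by
    refine strictMonoOn_of_deriv_pos (convex_Icc 0 r)
      (fun y hy => (hf y (habs hy)).continuousAt.continuousWithinAt) fun y hy => ?_
    rw [interior_Icc] at hy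
    rw [(hf y (habs (Ioo_subset_Icc_self hy))).deriv]
    exact hf' y ⟨hy.1, hy.2.trans hr.2⟩
  have := hmono (left_mem_Icc.mpr hr.1.le) (right_mem_Icc.mpr hr.1.le) hr.1
  rwa [h0] at this

lemma W_zero (θ : ℝ) : W 0 θ = 0 := by
  have (n : ℕ) : mIdx n ^ 2 ≠ 0 := by have := two_le_mIdx n; positivity
  simp [W, zero_pow (this _)]

lemma W₁_zero (θ : ℝ) : W₁ 0 θ = 0 := by
  have (n : ℕ) : mIdx n ^ 2 - 1 ≠ 0 := by
    have h : 2 ^ 2 ≤ mIdx n ^ 2 := Nat.pow_le_pow_left (two_le_mIdx n) 2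
    omega
  simp [W₁, zero_pow (this _)]

/-- `W`, `W_r`, and `W_{rr}` are strictly positive on `D₁ = (0,1) × (0,π/2)`. -/
theorem stmt2 (r θ : ℝ) (hr : r ∈ Ioo (0 : ℝ) 1) (hθ : θ ∈ Ioo (0 : ℝ) (π / 2)) :
    0 < W r θ ∧
    0 < deriv (fun s => W s θ) r ∧
    0 < iteratedDeriv 2 (fun s => W s θ) r := by
  have h1 (s : ℝ) (hs : s ∈ Ioo (0 : ℝ) 1) : 0 < W₁ s θ :=
    pos_of_hasDerivAt_pos (W₁_zero θ) (fun _ h => hasDerivAt_W₁ θ h)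
      (fun _ h => W₂_pos h hθ) hs
  have habs : |r| < 1 := by rw [abs_of_pos hr.1]; exact hr.2
  refine ⟨pos_of_hasDerivAt_pos (W_zero θ) (fun _ h => hasDerivAt_W θ h) h1 hr, ?_, ?_⟩
  · rw [(hasDerivAt_W θ habs).deriv]
    exact h1 r hr
  · have hev : deriv (fun s => W s θ) =ᶠ[𝓝 r] fun s => W₁ s θ := by
      filter_upwards [Ioo_mem_nhds (abs_lt.mp habs).1 (abs_lt.mp habs).2] with s hs
      exact (hasDerivAt_W θ (abs_lt.mpr hs)).deriv
    rw [iteratedDeriv_succ, iteratedDeriv_one, hev.deriv_eq, (hasDerivAt_W₁ θ habs).deriv]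
    exact W₂_pos hr hθ
end

section
/- The functions W and ∂W/∂θ, given by their termwise-differentiated series, are continuous on the closed rectangle D̄₁ = [0,1] × [0,π/2]. The partial derivative ∂W/∂r, defined on [0,1) × [0,π/2] by termwise differentiation, extends continuously to D̄₁ minus the two corner points (1,0) and (1,π/2), but has no continuous extension to either of these two points: indeed ∂W/∂r(r,0) = 0 for all r ∈ [0,1), while the continuous extension satisfies ∂W/∂r(1,θ) = cos θ + sin θ for θ ∈ (0,π/2), so the limit of ∂W/∂r along θ = 0 is 0 while the limit along r = 1 is 1. -/
/-!
The series of `W` and `Wθ` are dominated by `∑ 1/(n+1)²`, and the series of `Wr` by a geometric series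
on `r ≤ ρ < 1`, so only the behaviour of `Wr` near the edge `r = 1` needs an argument.

Multiplying the series of `Wr` by `2 sin 2θ` and summing by parts (`sin_mul_Wr`) gives the series
`abelSum`, whose terms are `O(1/n²)` uniformly in `0 ≤ r ≤ 1` (`abs_amp_sub_le`). So `abelSum` is
continuous up to `r = 1`, and dividing by `sin 2θ`, which is positive for `0 < θ < π/2`, extends `Wr`
continuously to the open edge. At `r = 1`, `abelSum` is an absolutely convergent cosine series, and
it is the Fourier series of `(π/4) sin 2θ (cos θ + sin θ)` on `[0, π/2]` (`hasSum_edge`); hence the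
boundary value is `cos θ + sin θ`.

At a corner there is no limit, since `Wr` vanishes for `θ = 0` and `θ = π/2` whereas its boundary
values on the open edge are at least `1`.
-/

open Real Set Topology Filter

/-- Termwise θ-derivative of `W`: `W_θ(r,θ) = (8/π) ∑ r^{mₙ²} cos(mₙθ)/(mₙ² − 1)`. -/
noncomputable def Wθ (r θ : ℝ) : ℝ :=
  (8 / π) * ∑' n : ℕ, r ^ (mIdx n ^ 2) * Real.cos ((mIdx n : ℝ) * θ) / ((mIdx n : ℝ) ^ 2 - 1)

/-- Termwise r-derivative of `W`: `W_r(r,θ) = (8/π) ∑ mₙ r^{mₙ² − 1} sin(mₙθ)/(mₙ² − 1)`. -/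
noncomputable def Wr (r θ : ℝ) : ℝ :=
  (8 / π) * ∑' n : ℕ,
    (mIdx n : ℝ) * r ^ (mIdx n ^ 2 - 1) * Real.sin ((mIdx n : ℝ) * θ) / ((mIdx n : ℝ) ^ 2 - 1)

/-! ### Coefficients and the Fourier series on the edge `r = 1` -/

/-- The coefficient `βₙ = mₙ / (mₙ² − 1)` of `sin (mₙθ)` in the series of `Wr` at `r = 1`, without the
factor `8/π`. -/
noncomputable def beta (n : ℕ) : ℝ := (mIdx n : ℝ) / ((mIdx n : ℝ) ^ 2 - 1)

/-- The `k`-th Fourier coefficient of the `π/2`-periodic extension of `edge`, i.e. the coefficient of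
`exp (4ikx)`. It is even in `k`, equals `β₀` at `0` and `(βₖ − βₖ₋₁)/2` for `k ≥ 1`. -/
noncomputable def coef (k : ℤ) : ℝ :=
  (1 / (4 * k + 1) + 1 / (4 * k + 3) - 1 / (4 * k - 3) - 1 / (4 * k - 1)) / 4

theorem mIdx_cast (n : ℕ) : (mIdx n : ℝ) = 4 * n + 2 := by
  simp [mIdx]

theorem mIdx_sq_sub_one_pos (n : ℕ) : 0 < (mIdx n : ℝ) ^ 2 - 1 := by
  rw [mIdx_cast]
  have : (0 : ℝ) ≤ n := n.cast_nonneg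
  nlinarith

theorem beta_pos (n : ℕ) : 0 < beta n :=
  div_pos (by rw [mIdx_cast]; positivity) (mIdx_sq_sub_one_pos n)

theorem beta_le (n : ℕ) : beta n ≤ 1 / (n + 1) := by
  rw [beta, div_le_div_iff₀ (mIdx_sq_sub_one_pos n) (by positivity), mIdx_cast]
  have : (0 : ℝ) ≤ n := n.cast_nonneg
  nlinarith

/-- Partial fractions for `βₙ`. -/
theorem beta_eq (n : ℕ) : beta n = (1 / (4 * n + 1) + 1 / (4 * n + 3)) / 2 := by
  have h := (mIdx_sq_sub_one_pos n).ne'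
  rw [mIdx_cast] at h
  have h1 : (4 * n + 1 : ℝ) ≠ 0 := by positivity
  have h3 : (4 * n + 3 : ℝ) ≠ 0 := by positivity
  rw [beta, mIdx_cast, div_eq_iff h]
  field_simp
  ring

theorem beta_sub_bounds (n : ℕ) :
    0 ≤ beta n - beta (n + 1) ∧ beta n - beta (n + 1) ≤ 4 / (n + 1 : ℝ) ^ 2 := by
  have hn : (0 : ℝ) ≤ n := n.cast_nonneg
  have e : beta n - beta (n + 1) =
      2 / ((4 * n + 1) * (4 * n + 5)) + 2 / ((4 * n + 3) * (4 * n + 7)) := by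
    rw [beta_eq, beta_eq]
    push_cast
    have h5 : (4 * (n + 1) + 1 : ℝ) ≠ 0 := by positivity
    have h7 : (4 * (n + 1) + 3 : ℝ) ≠ 0 := by positivity
    field_simp
    ring
  rw [e]
  refine ⟨by positivity, ?_⟩
  have h1 : 2 / ((4 * n + 1) * (4 * n + 5)) ≤ 2 / (n + 1 : ℝ) ^ 2 := by
    apply div_le_div_of_nonneg_left <;> nlinarith
  have h2 : 2 / ((4 * n + 3) * (4 * n + 7)) ≤ 2 / (n + 1 : ℝ) ^ 2 := by
    apply div_le_div_of_nonneg_left <;> nlinarith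
  calc _ ≤ 2 / (n + 1 : ℝ) ^ 2 + 2 / (n + 1 : ℝ) ^ 2 := add_le_add h1 h2
    _ = _ := by ring

theorem summable_const_div_sq (C : ℝ) : Summable fun n : ℕ => C / (n + 1 : ℝ) ^ 2 := by
  have h := (summable_nat_add_iff (f := fun n : ℕ => 1 / (n : ℝ) ^ 2) 1).2
    (Real.summable_one_div_nat_pow.2 one_lt_two)
  simpa [div_eq_mul_inv] using h.mul_left C

theorem coef_neg (k : ℤ) : coef (-k) = coef k := by
  simp only [coef]
  push_cast
  rw [show (4 * -(k : ℝ) + 1) = -(4 * k - 1) by ring, show (4 * -(k : ℝ) + 3) = -(4 * k - 3) by ring,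
    show (4 * -(k : ℝ) - 3) = -(4 * k + 3) by ring, show (4 * -(k : ℝ) - 1) = -(4 * k + 1) by ring]
  simp only [div_neg]
  ring

theorem coef_succ (n : ℕ) : coef (n + 1 : ℕ) = (beta (n + 1) - beta n) / 2 := by
  rw [coef, beta_eq, beta_eq]
  push_cast
  rw [show (4 * ((n : ℝ) + 1) - 3) = 4 * n + 1 by ring,
    show (4 * ((n : ℝ) + 1) - 1) = 4 * n + 3 by ring]
  ring

theorem coef_zero : coef 0 = beta 0 := by
  rw [coef, beta_eq]
  norm_num

theorem summable_coef : Summable coef := by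
  have h : Summable fun n : ℕ => coef n := by
    rw [← summable_nat_add_iff 1]
    refine .of_norm_bounded (summable_const_div_sq 4) fun n => ?_
    rw [coef_succ, Real.norm_eq_abs, abs_le]
    have := beta_sub_bounds n
    constructor <;> linarith
  exact .of_nat_of_neg h (by simpa only [coef_neg] using h)

theorem integral_exp_int_mul (c : ℤ) (hc : c ≠ 0) :
    ∫ x in (0 : ℝ)..(π / 2), Complex.exp (c * Complex.I * x) =
      (Complex.I ^ c - 1) / (c * Complex.I) := by
  rw [integral_exp_mul_complex (mul_ne_zero (Int.cast_ne_zero.2 hc) Complex.I_ne_zero)]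
  congr 2
  · rw [show (c : ℂ) * Complex.I * ((π / 2 : ℝ) : ℂ) = c * (π / 2 * Complex.I) by push_cast; ring,
      Complex.exp_int_mul, Complex.exp_pi_div_two_mul_I]
  · simp

theorem I_zpow_sub (a k : ℤ) : Complex.I ^ (a - 4 * k) = Complex.I ^ a := by
  rw [zpow_sub₀ Complex.I_ne_zero, zpow_mul]
  norm_cast
  simp

/-- `(π/4) sin 2x (cos x + sin x)`: the claimed boundary value of `W_r` at `r = 1`, multiplied by
`(π/4) sin 2x`. It vanishes at `0` and `π/2`, hence is continuous as a `π/2`-periodic function. -/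
noncomputable def edge (x : ℝ) : ℝ := π / 4 * (Real.sin (2 * x) * (Real.cos x + Real.sin x))

/-- The integrand of the `k`-th Fourier coefficient of `edge` as a combination of exponentials
`exp (i(a − 4k)x)` with `a ∈ {±1, ±3}`; the frequencies are odd, so none of them vanishes. -/
theorem edge_mul_exp (k : ℤ) (x : ℝ) :
    Complex.exp (-(4 * k * Complex.I * x)) * (edge x : ℂ) = π / 16 *
      ((1 - Complex.I) * Complex.exp (((1 - 4 * k : ℤ) : ℂ) * Complex.I * x)
      + (1 + Complex.I) * Complex.exp (((-1 - 4 * k : ℤ) : ℂ) * Complex.I * x)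
      + (-1 - Complex.I) * Complex.exp (((3 - 4 * k : ℤ) : ℂ) * Complex.I * x)
      + (-1 + Complex.I) * Complex.exp (((-3 - 4 * k : ℤ) : ℂ) * Complex.I * x)) := by
  set z := Complex.exp (x * Complex.I) with hz
  have hz0 : z ≠ 0 := Complex.exp_ne_zero _
  have hzi : Complex.exp (-x * Complex.I) = z⁻¹ := by rw [hz, ← Complex.exp_neg]; ring_nf
  have hE : ∀ a : ℤ, Complex.exp (((a - 4 * k : ℤ) : ℂ) * Complex.I * x) =
      Complex.exp (-(4 * k * Complex.I * x)) * z ^ a := by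
    intro a
    rw [hz, ← Complex.exp_int_mul, ← Complex.exp_add]
    push_cast
    ring_nf
  have hs : Real.sin (2 * x) = 2 * Real.sin x * Real.cos x := Real.sin_two_mul x
  rw [hE, hE, hE, hE, edge, hs]
  push_cast
  rw [Complex.cos, Complex.sin, hzi, ← hz]
  have h3 : z ^ (3 : ℤ) = z ^ 3 := by norm_cast
  have h3' : z ^ (-3 : ℤ) = (z ^ 3)⁻¹ := by rw [zpow_neg, h3]
  rw [h3, h3', zpow_one, zpow_neg_one]
  have hI2 : Complex.I ^ 2 = -1 := Complex.I_sq
  field_simp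
  ring_nf
  simp only [hI2]
  ring

theorem integral_edge (k : ℤ) :
    ∫ x in (0 : ℝ)..(π / 2), Complex.exp (-(4 * k * Complex.I * x)) * (edge x : ℂ) =
      π / 2 * (coef k : ℂ) := by
  have hi : ∀ (w : ℂ) (c : ℤ), IntervalIntegrable
      (fun x : ℝ => w * Complex.exp (c * Complex.I * x)) MeasureTheory.volume 0 (π / 2) :=
    fun w c => Continuous.intervalIntegrable (by fun_prop) _ _
  simp_rw [edge_mul_exp]
  rw [intervalIntegral.integral_const_mul,
    intervalIntegral.integral_add (((hi _ _).add (hi _ _)).add (hi _ _)) (hi _ _),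
    intervalIntegral.integral_add ((hi _ _).add (hi _ _)) (hi _ _),
    intervalIntegral.integral_add (hi _ _) (hi _ _)]
  simp only [intervalIntegral.integral_const_mul]
  rw [integral_exp_int_mul _ (by omega), integral_exp_int_mul _ (by omega),
    integral_exp_int_mul _ (by omega), integral_exp_int_mul _ (by omega)]
  simp only [I_zpow_sub]
  have h3 : Complex.I ^ (3 : ℤ) = -Complex.I := by
    have : Complex.I ^ (3 : ℤ) = Complex.I ^ 3 := by norm_cast
    rw [this, Complex.I_pow_three]
  have h3' : Complex.I ^ (-3 : ℤ) = Complex.I := by rw [zpow_neg, h3]; simp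
  rw [h3, h3', zpow_one, zpow_neg_one, Complex.inv_I, coef]
  have hI2 : Complex.I ^ 2 = -1 := Complex.I_sq
  have c1 : (4 * k + 1 : ℂ) ≠ 0 := by exact_mod_cast (show 4 * k + 1 ≠ 0 by omega)
  have c2 : (4 * k + 3 : ℂ) ≠ 0 := by exact_mod_cast (show 4 * k + 3 ≠ 0 by omega)
  have c3 : (4 * k - 3 : ℂ) ≠ 0 := by exact_mod_cast (show 4 * k - 3 ≠ 0 by omega)
  have c4 : (4 * k - 1 : ℂ) ≠ 0 := by exact_mod_cast (show 4 * k - 1 ≠ 0 by omega)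
  push_cast
  rw [show (1 - 4 * k : ℂ) = -(4 * k - 1) by ring, show (-1 - 4 * k : ℂ) = -(4 * k + 1) by ring,
    show (3 - 4 * k : ℂ) = -(4 * k - 3) by ring, show (-3 - 4 * k : ℂ) = -(4 * k + 3) by ring]
  have q1 : ∀ (u v : ℂ) , u / (-v * Complex.I) = u * Complex.I / v := by
    intro u v
    rw [neg_mul, div_neg, div_mul_eq_div_div, Complex.div_I]; ring
  simp only [q1]
  have e1 : (1 - Complex.I) * ((Complex.I - 1) * Complex.I) = -2 := by linear_combination (2 - Complex.I) * hI2
  have e2 : (1 + Complex.I) * ((-Complex.I - 1) * Complex.I) = 2 := by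
    linear_combination (-2 - Complex.I) * hI2
  have e3 : (-1 - Complex.I) * ((-Complex.I - 1) * Complex.I) = -2 := by
    linear_combination (2 + Complex.I) * hI2
  have e4 : (-1 + Complex.I) * ((Complex.I - 1) * Complex.I) = 2 := by
    linear_combination (-2 + Complex.I) * hI2
  simp only [← mul_div_assoc, e1, e2, e3, e4]
  ring

/-- Fourier series of `edge`, which converges pointwise because its coefficients are summable. -/
theorem hasSum_edge {x : ℝ} (hx : x ∈ Ico 0 (π / 2)) :
    HasSum (fun n : ℕ => (beta (n + 1) - beta n) * Real.cos (4 * (n + 1) * x))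
      (edge x - beta 0) := by
  have hT : Fact (0 < π / 2) := ⟨by positivity⟩
  have hcont : Continuous edge := by unfold edge; fun_prop
  let f : C(AddCircle (π / 2), ℂ) := ⟨AddCircle.liftIco (π / 2) 0 (fun x => (edge x : ℂ)),
    AddCircle.liftIco_zero_continuous (by
      simp [edge, show 2 * (π / 2) = π by ring]) (by fun_prop)⟩
  have hc : ∀ k : ℤ, fourierCoeff f k = (coef k : ℂ) := by
    intro k
    change fourierCoeff (AddCircle.liftIco (π / 2) 0 (fun x => (edge x : ℂ))) k = _
    rw [fourierCoeff_liftIco_eq, fourierCoeffOn_eq_integral]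
    have hpi : (π : ℂ) ≠ 0 := Complex.ofReal_ne_zero.2 Real.pi_ne_zero
    have : ∀ y : ℝ, fourier (-k) (y : AddCircle (0 + π / 2 - 0)) • (edge y : ℂ) =
        Complex.exp (-(4 * k * Complex.I * y)) * (edge y : ℂ) := by
      intro y
      rw [fourier_coe_apply, smul_eq_mul]
      congr 2
      push_cast
      field_simp
      ring
    simp_rw [this]
    rw [zero_add, integral_edge, Complex.real_smul]
    push_cast
    field_simp
    ring
  have hs : Summable (fourierCoeff f) := by
    have : fourierCoeff f = fun k => (coef k : ℂ) := funext hc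
    rw [this]
    exact_mod_cast summable_coef
  have hsum := has_pointwise_sum_fourier_series_of_summable hs (x : AddCircle (π / 2))
  have hfx : f (x : AddCircle (π / 2)) = (edge x : ℂ) :=
    AddCircle.liftIco_coe_apply (p := π / 2) (a := (0 : ℝ)) (f := fun x => (edge x : ℂ))
      (by simpa using hx)
  rw [hfx] at hsum
  have h2 := hsum.nat_add_neg
  have h3 : HasSum (fun n : ℕ => 2 * coef n * Real.cos (4 * n * x)) (edge x + coef 0) := by
    rw [← Complex.hasSum_ofReal]
    have hpi : (π : ℂ) ≠ 0 := Complex.ofReal_ne_zero.2 Real.pi_ne_zero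
    convert h2 using 1
    · ext n
      rw [hc, hc, coef_neg, fourier_coe_apply, fourier_coe_apply]
      push_cast
      rw [Complex.cos, smul_eq_mul, smul_eq_mul,
        show 2 * π * Complex.I * n * x / (π / 2) = 4 * n * x * Complex.I by field_simp; ring,
        show 2 * π * Complex.I * (-n) * x / (π / 2) = -(4 * n * x) * Complex.I by field_simp; ring]
      ring
    · rw [hc]; simp
  rw [← hasSum_nat_add_iff' 1] at h3
  have e1 : ∀ n : ℕ, 2 * coef (n + 1 : ℕ) * Real.cos (4 * (n + 1 : ℕ) * x) =
      (beta (n + 1) - beta n) * Real.cos (4 * (n + 1) * x) := by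
    intro n
    rw [coef_succ]
    push_cast
    ring
  have e2 : edge x + coef 0 - ∑ i ∈ Finset.range 1, 2 * coef i * Real.cos (4 * i * x) =
      edge x - beta 0 := by
    rw [Finset.sum_range_one, Nat.cast_zero, Nat.cast_zero, coef_zero]
    simp only [mul_zero, zero_mul, Real.cos_zero]
    ring
  rw [e2] at h3
  simpa only [e1] using h3

/-! ### Summation by parts -/

/-- The coefficient `βₙ r^{mₙ² − 1}` of `sin (mₙθ)` in the series of `Wr`, without the factor `8/π`. -/
noncomputable def amp (n : ℕ) (r : ℝ) : ℝ := beta n * r ^ (mIdx n ^ 2 - 1)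

/-- The series `2 sin 2θ ∑ amp n r · sin (mₙθ)` after summation by parts. Unlike the original series it
converges uniformly up to `r = 1`. -/
noncomputable def abelSum (p : ℝ × ℝ) : ℝ :=
  amp 0 p.1 + ∑' n : ℕ, (amp (n + 1) p.1 - amp n p.1) * Real.cos (4 * (n + 1) * p.2)

/-- The term `r ^ (p + 1)` strengthens `(p + 1) r ^ p (1 - r) ≤ 1` enough for the induction to close. -/
theorem succ_mul_pow_mul_one_sub_le {r : ℝ} (h0 : 0 ≤ r) (h1 : r ≤ 1) (p : ℕ) :
    (p + 1) * (r ^ p * (1 - r)) + r ^ (p + 1) ≤ 1 := by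
  induction p with
  | zero => simp
  | succ p ih =>
    have hp : r ^ (p + 1) ≤ 1 := pow_le_one₀ h0 h1
    have h2 := mul_le_mul_of_nonneg_left ih h0
    have h3 := mul_le_mul_of_nonneg_right hp (sub_nonneg.2 h1)
    push_cast
    rw [pow_succ r (p + 1)]
    rw [pow_succ] at h2 h3 ⊢
    nlinarith

theorem pow_mul_one_sub_pow_le {r : ℝ} (h0 : 0 ≤ r) (h1 : r ≤ 1) (p q : ℕ) :
    r ^ p * (1 - r ^ q) ≤ q / (p + 1) := by
  have hq : 1 - r ^ q ≤ q * (1 - r) := by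
    have := one_add_mul_sub_le_pow (show -1 ≤ r by linarith) q
    linarith
  have hp := succ_mul_pow_mul_one_sub_le h0 h1 p
  have h2 : (p + 1) * (r ^ p * (1 - r)) ≤ 1 := by
    have := pow_nonneg h0 (p + 1)
    linarith
  rw [le_div_iff₀ (by positivity)]
  have h3 := mul_le_mul_of_nonneg_left hq (pow_nonneg h0 p)
  have h4 := mul_le_mul_of_nonneg_left h2 (Nat.cast_nonneg (α := ℝ) q)
  nlinarith [mul_le_mul_of_nonneg_right h3 (by positivity : (0 : ℝ) ≤ p + 1)]

/-- The Weierstrass bound behind the continuity of `abelSum`. Both contributions to the difference are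
`O(1/n²)`: the one from `βₙ − βₙ₊₁` directly, and the one from the powers because
`r^p (1 − r^q) ≤ q / (p + 1)` with `p + 1 = mₙ²` and `q = 32 (n + 1)`. -/
theorem abs_amp_sub_le (n : ℕ) {r : ℝ} (h0 : 0 ≤ r) (h1 : r ≤ 1) :
    |amp (n + 1) r - amp n r| ≤ 12 / (n + 1 : ℝ) ^ 2 := by
  have hn : (0 : ℝ) ≤ n := n.cast_nonneg
  set p := mIdx n ^ 2 - 1 with hp
  have hsq : p + 1 = mIdx n ^ 2 := by
    have : 0 < mIdx n ^ 2 := by simp [mIdx]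
    omega
  have hpr : (p : ℝ) + 1 = (4 * n + 2) ^ 2 := by
    rw [← mIdx_cast]; exact_mod_cast hsq
  have hq : mIdx (n + 1) ^ 2 - 1 = p + 32 * (n + 1) := by
    have : mIdx (n + 1) ^ 2 = mIdx n ^ 2 + 32 * (n + 1) := by simp only [mIdx]; ring
    omega
  have e : amp (n + 1) r - amp n r = -((beta n - beta (n + 1)) * r ^ p +
      beta (n + 1) * (r ^ p * (1 - r ^ (32 * (n + 1))))) := by
    rw [amp, amp, hq, ← hp, pow_add]; ring
  have hb := beta_sub_bounds n
  have hrp : r ^ p ≤ 1 := pow_le_one₀ h0 h1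
  have hrp0 : 0 ≤ r ^ p := pow_nonneg h0 p
  have hrq : r ^ (32 * (n + 1)) ≤ 1 := pow_le_one₀ h0 h1
  have t1 : (beta n - beta (n + 1)) * r ^ p ≤ 4 / (n + 1 : ℝ) ^ 2 :=
    (mul_le_of_le_one_right hb.1 hrp).trans hb.2
  have t2 : r ^ p * (1 - r ^ (32 * (n + 1))) ≤ 8 / (n + 1) := by
    refine (pow_mul_one_sub_pow_le h0 h1 _ _).trans ?_
    rw [hpr, div_le_div_iff₀ (by positivity) (by positivity)]
    push_cast
    nlinarith
  have hb1 : beta (n + 1) ≤ 1 / (n + 1) := by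
    refine (beta_le _).trans ?_
    push_cast
    apply div_le_div_of_nonneg_left <;> linarith
  have t0 : 0 ≤ r ^ p * (1 - r ^ (32 * (n + 1))) := mul_nonneg hrp0 (by linarith)
  have t3 : beta (n + 1) * (r ^ p * (1 - r ^ (32 * (n + 1)))) ≤ 1 / (n + 1) * (8 / (n + 1)) :=
    mul_le_mul hb1 t2 t0 (by positivity)
  rw [e, abs_neg, abs_of_nonneg (add_nonneg (mul_nonneg hb.1 hrp0)
    (mul_nonneg (beta_pos _).le t0))]
  calc _ ≤ 4 / (n + 1 : ℝ) ^ 2 + 1 / (n + 1) * (8 / (n + 1)) := add_le_add t1 t3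
    _ = _ := by field_simp; norm_num

theorem continuousOn_abelSum : ContinuousOn abelSum (Icc 0 1 ×ˢ univ) := by
  unfold abelSum amp
  refine .add (by fun_prop) (continuousOn_tsum (fun n => by fun_prop)
    (summable_const_div_sq 12) fun n p hp => ?_)
  rw [norm_mul, Real.norm_eq_abs, Real.norm_eq_abs]
  exact (mul_le_of_le_one_right (abs_nonneg _) (Real.abs_cos_le_one _)).trans
    (abs_amp_sub_le n hp.1.1 hp.1.2)

theorem abelSum_one {θ : ℝ} (hθ : θ ∈ Ioo 0 (π / 2)) : abelSum (1, θ) = edge θ := by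
  have h := (hasSum_edge (Ioo_subset_Ico_self hθ)).tsum_eq
  simp only [abelSum, amp, one_pow, mul_one, h]
  ring

/-! ### `Wr` for `r < 1` and its extension to the open edge -/

theorem le_mIdx_sq_sub_one (n : ℕ) : n ≤ mIdx n ^ 2 - 1 := by
  have : n + 1 ≤ mIdx n ^ 2 := by simp only [mIdx]; nlinarith
  omega

theorem abs_amp_le (n : ℕ) {r ρ : ℝ} (h0 : 0 ≤ r) (h : r ≤ ρ) (h1 : ρ ≤ 1) :
    |amp n r| ≤ ρ ^ n := by
  have hb : beta n ≤ 1 := (beta_le n).trans (by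
    rw [div_le_one (by positivity)]; have := n.cast_nonneg (α := ℝ); linarith)
  rw [amp, abs_of_nonneg (mul_nonneg (beta_pos n).le (pow_nonneg h0 _))]
  calc beta n * r ^ (mIdx n ^ 2 - 1) ≤ 1 * ρ ^ n := by
        refine mul_le_mul hb ?_ (pow_nonneg h0 _) zero_le_one
        exact (pow_le_pow_left₀ h0 h _).trans
          (pow_le_pow_of_le_one (h0.trans h) h1 (le_mIdx_sq_sub_one n))
    _ = ρ ^ n := one_mul _

theorem Wr_eq (r θ : ℝ) : Wr r θ = 8 / π * ∑' n : ℕ, amp n r * Real.sin ((4 * n + 2) * θ) := by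
  simp only [Wr, amp, beta, mIdx_cast]
  congr 2
  ext n
  ring

/-- Summation by parts, from
`2 sin 2θ sin ((4n + 2)θ) = cos (4nθ) − cos (4(n + 1)θ)`. -/
theorem sin_mul_Wr {r : ℝ} (hr : r ∈ Ico (0 : ℝ) 1) (θ : ℝ) :
    Real.sin (2 * θ) * Wr r θ = 4 / π * abelSum (r, θ) := by
  have hs : ∀ g : ℕ → ℝ, (∀ n, |g n| ≤ 1) → Summable fun n => amp n r * g n := fun g hg =>
    .of_norm_bounded (summable_geometric_of_lt_one hr.1 hr.2) fun n => by
      rw [norm_mul]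
      exact (mul_le_of_le_one_right (norm_nonneg _) (hg n)).trans
        (abs_amp_le n hr.1 le_rfl hr.2.le)
  have s1 := hs (fun n => Real.cos (4 * n * θ)) fun n => Real.abs_cos_le_one _
  have s2 := hs (fun n => Real.cos (4 * (n + 1) * θ)) fun n => Real.abs_cos_le_one _
  have s3 := (summable_nat_add_iff 1).2 s1
  have key : ∀ n : ℕ, 2 * Real.sin (2 * θ) * (amp n r * Real.sin ((4 * n + 2) * θ)) =
      amp n r * Real.cos (4 * n * θ) - amp n r * Real.cos (4 * (n + 1) * θ) := by
    intro n
    rw [show 4 * (n : ℝ) * θ = (4 * n + 2) * θ - 2 * θ by ring,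
      show 4 * ((n : ℝ) + 1) * θ = (4 * n + 2) * θ + 2 * θ by ring, Real.cos_sub, Real.cos_add]
    ring
  have e : 2 * Real.sin (2 * θ) * ∑' n : ℕ, amp n r * Real.sin ((4 * n + 2) * θ) =
      abelSum (r, θ) := by
    rw [← tsum_mul_left]
    simp_rw [key]
    rw [s1.tsum_sub s2, s1.tsum_eq_zero_add, add_sub_assoc, ← s3.tsum_sub s2, abelSum]
    simp only [Nat.cast_zero, mul_zero, zero_mul, Real.cos_zero, mul_one, Nat.cast_add,
      Nat.cast_one, sub_mul]
  rw [Wr_eq, ← e]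
  ring

theorem continuousOn_Wr {ρ : ℝ} (hρ : ρ < 1) :
    ContinuousOn (fun p : ℝ × ℝ => Wr p.1 p.2) (Icc 0 ρ ×ˢ univ) := by
  rcases lt_or_ge ρ 0 with h | h
  · simp [Icc_eq_empty_of_lt h]
  simp_rw [Wr_eq]
  refine continuousOn_const.mul (continuousOn_tsum (fun n => by unfold amp; fun_prop)
    (summable_geometric_of_lt_one h hρ) fun n p hp => ?_)
  rw [norm_mul]
  exact (mul_le_of_le_one_right (norm_nonneg _) (Real.abs_sin_le_one _)).trans
    (abs_amp_le n hp.1.1 hp.1.2 hρ.le)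

theorem Wr_zero (r : ℝ) : Wr r 0 = 0 := by simp [Wr]

theorem Wr_pi_div_two (r : ℝ) : Wr r (π / 2) = 0 := by
  have : ∀ n : ℕ, Real.sin ((4 * n + 2) * (π / 2)) = 0 := fun n => by
    rw [show (4 * (n : ℝ) + 2) * (π / 2) = ((2 * n + 1 : ℕ) : ℝ) * π by push_cast; ring]
    exact Real.sin_nat_mul_pi _
  simp [Wr_eq, this]

/-- The continuous extension of `Wr`. It is used only for `0 ≤ r ≤ 1`, where the second branch is the edge
`r = 1`. -/
noncomputable def WrExt (p : ℝ × ℝ) : ℝ :=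
  if p.1 < 1 then Wr p.1 p.2 else Real.cos p.2 + Real.sin p.2

theorem sin_two_mul_pos {θ : ℝ} (hθ : θ ∈ Ioo 0 (π / 2)) : 0 < Real.sin (2 * θ) :=
  Real.sin_pos_of_pos_of_lt_pi (by linarith [hθ.1]) (by linarith [hθ.2])

theorem WrExt_eq_div {r θ : ℝ} (hr : r ∈ Icc (0 : ℝ) 1) (hθ : θ ∈ Ioo 0 (π / 2)) :
    WrExt (r, θ) = 4 / π * abelSum (r, θ) / Real.sin (2 * θ) := by
  have hs := sin_two_mul_pos hθ
  rw [eq_div_iff hs.ne', WrExt]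
  split_ifs with h
  · rw [mul_comm]; exact sin_mul_Wr ⟨hr.1, h⟩ θ
  · obtain rfl : r = 1 := le_antisymm hr.2 (not_lt.1 h)
    rw [abelSum_one hθ, edge]
    field_simp

theorem continuousWithinAt_WrExt {r θ : ℝ} (hr : r ∈ Icc (0 : ℝ) 1) (hθ : θ ∈ Ioo 0 (π / 2)) :
    ContinuousWithinAt WrExt (Icc 0 1 ×ˢ univ) (r, θ) := by
  have hs := sin_two_mul_pos hθ
  have h1 : ContinuousWithinAt (fun p : ℝ × ℝ => 4 / π * abelSum p / Real.sin (2 * p.2))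
      (Icc 0 1 ×ˢ univ) (r, θ) :=
    (continuousWithinAt_const.mul (continuousOn_abelSum _ ⟨hr, mem_univ _⟩)).div
      (by fun_prop) hs.ne'
  refine h1.congr_of_eventuallyEq ?_ (WrExt_eq_div hr hθ)
  have hU : ∀ᶠ p : ℝ × ℝ in 𝓝[Icc 0 1 ×ˢ univ] (r, θ), p.2 ∈ Ioo 0 (π / 2) :=
    nhdsWithin_le_nhds (continuous_snd.continuousAt.eventually (isOpen_Ioo.mem_nhds hθ))
  filter_upwards [hU, self_mem_nhdsWithin] with p hp hp'
  exact WrExt_eq_div hp'.1 hp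

theorem continuousWithinAt_WrExt_of_lt {r : ℝ} (hr : r ∈ Ico (0 : ℝ) 1) (θ : ℝ) :
    ContinuousWithinAt WrExt (Icc 0 1 ×ˢ univ) (r, θ) := by
  obtain ⟨ρ, h1, h2⟩ := exists_between hr.2
  have hU : ∀ᶠ p : ℝ × ℝ in 𝓝 (r, θ), p.1 < ρ :=
    continuous_fst.continuousAt.eventually_lt continuousAt_const h1
  have hc := continuousOn_Wr h2 (r, θ) ⟨⟨hr.1, h1.le⟩, mem_univ _⟩
  have hc' : ContinuousWithinAt (fun p : ℝ × ℝ => Wr p.1 p.2) (Icc 0 1 ×ˢ univ) (r, θ) := by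
    refine hc.mono_of_mem_nhdsWithin ?_
    filter_upwards [nhdsWithin_le_nhds hU, self_mem_nhdsWithin] with p hp hp'
    exact ⟨⟨hp'.1.1, hp.le⟩, mem_univ _⟩
  refine hc'.congr_of_eventuallyEq ?_ (if_pos hr.2)
  filter_upwards [nhdsWithin_le_nhds hU] with p hp
  exact if_pos (hp.trans h2)

/-! ### The corners -/

theorem one_le_cos_add_sin {θ : ℝ} (hθ : θ ∈ Ioo 0 (π / 2)) : 1 ≤ Real.cos θ + Real.sin θ := by
  have hs : 0 < Real.sin θ := Real.sin_pos_of_pos_of_lt_pi hθ.1 (by linarith [hθ.2, Real.pi_pos])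
  have hc : 0 < Real.cos θ := Real.cos_pos_of_mem_Ioo ⟨by linarith [hθ.1, Real.pi_pos], hθ.2⟩
  nlinarith [Real.sin_sq_add_cos_sq θ]

/-- Near `(1, c)` there are points `(r, c)` where `Wr` is `0`, and points `(r, θ)` with `θ` interior and
`r < 1` so close to `1` that `Wr r θ` is near `cos θ + sin θ ≥ 1`. The detour through `r < 1` is needed
as `G` is not prescribed on the edge `r = 1`. -/
theorem no_extension_at_corner {c : ℝ} (hc : c ∈ Icc 0 (π / 2)) (hz : ∀ r, Wr r c = 0) :
    ¬ ∃ G : ℝ × ℝ → ℝ,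
      ContinuousWithinAt G (Icc 0 1 ×ˢ Icc 0 (π / 2)) ((1 : ℝ), c) ∧
      ∀ p ∈ (Ico (0 : ℝ) 1) ×ˢ Icc (0 : ℝ) (π / 2), G p = Wr p.1 p.2 := by
  rintro ⟨G, hG, hGW⟩
  obtain ⟨δ, hδ, hball⟩ := Metric.continuousWithinAt_iff.1 hG (1 / 4) (by norm_num)
  obtain ⟨θ, hθ, hθc⟩ : ∃ θ ∈ Ioo 0 (π / 2), dist c θ < δ := by
    rw [← closure_Ioo (by positivity : (0 : ℝ) ≠ π / 2)] at hc
    exact Metric.mem_closure_iff.1 hc δ hδ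
  have hlim : Tendsto (fun r : ℝ => Wr r θ) (𝓝[<] 1) (𝓝 (Real.cos θ + Real.sin θ)) := by
    have h := continuousWithinAt_WrExt (right_mem_Icc.2 zero_le_one) hθ
    have h1 : WrExt (1, θ) = Real.cos θ + Real.sin θ := if_neg (lt_irrefl _)
    rw [ContinuousWithinAt, h1] at h
    have hp : Tendsto (fun r : ℝ => (r, θ)) (𝓝[<] 1) (𝓝[Icc 0 1 ×ˢ univ] (1, θ)) := by
      refine tendsto_nhdsWithin_iff.2 ⟨?_, ?_⟩
      · exact (Continuous.prodMk_left θ).continuousAt.mono_left nhdsWithin_le_nhds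
      · filter_upwards [Ico_mem_nhdsLT (zero_lt_one (α := ℝ))] with r hr
        exact ⟨Ico_subset_Icc_self hr, mem_univ _⟩
    refine (h.comp hp).congr' ?_
    filter_upwards [self_mem_nhdsWithin] with r hr
    exact if_pos hr
  have hev : ∀ᶠ r : ℝ in 𝓝[<] 1, 1 / 2 < Wr r θ :=
    hlim.eventually (lt_mem_nhds (by linarith [one_le_cos_add_sin hθ]))
  obtain ⟨r, ⟨hW, (hr : r ∈ Ico (0 : ℝ) 1)⟩, hrδ⟩ := ((hev.and (Ico_mem_nhdsLT (zero_lt_one (α := ℝ)))).and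
    (nhdsWithin_le_nhds (Metric.ball_mem_nhds (1 : ℝ) hδ))).exists
  have hθ' := Ioo_subset_Icc_self hθ
  have hr' := Ico_subset_Icc_self hr
  have d1 := hball (x := (r, θ)) ⟨hr', hθ'⟩ (by
    rw [Prod.dist_eq]; exact max_lt hrδ (by rwa [dist_comm]))
  have d2 := hball (x := (r, c)) ⟨hr', hc⟩ (by
    rw [Prod.dist_eq]; exact max_lt hrδ (by simpa using hδ))
  rw [hGW _ ⟨hr, hθ'⟩, Real.dist_eq, abs_lt] at d1
  rw [hGW _ ⟨hr, hc⟩, hz, Real.dist_eq, abs_lt] at d2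
  linarith [d1.2, d2.1]

/-! ### Continuity of `W` and `Wθ` -/

theorem one_div_mIdx_sq_le (n : ℕ) : 1 / ((mIdx n : ℝ) ^ 2 - 1) ≤ 1 / (n + 1 : ℝ) ^ 2 := by
  have hn : (0 : ℝ) ≤ n := n.cast_nonneg
  apply one_div_le_one_div_of_le (by positivity)
  rw [mIdx_cast]
  nlinarith

theorem abs_pow_mul_div_le (n : ℕ) {r t d : ℝ} (hr : r ∈ Icc (0 : ℝ) 1) (ht : |t| ≤ 1)
    (hd : (mIdx n : ℝ) ^ 2 - 1 ≤ d) :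
    ‖r ^ (mIdx n ^ 2) * t / d‖ ≤ 1 / (n + 1 : ℝ) ^ 2 := by
  have hpos := mIdx_sq_sub_one_pos n
  rw [norm_div, norm_mul, Real.norm_eq_abs d, abs_of_pos (hpos.trans_le hd), Real.norm_eq_abs,
    abs_of_nonneg (pow_nonneg hr.1 _)]
  calc _ ≤ 1 / ((mIdx n : ℝ) ^ 2 - 1) := div_le_div₀ zero_le_one
        (mul_le_one₀ (pow_le_one₀ hr.1 hr.2) (norm_nonneg _) ht) hpos hd
    _ ≤ _ := one_div_mIdx_sq_le n

theorem continuousOn_W :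
    ContinuousOn (fun p : ℝ × ℝ => W p.1 p.2) (Icc 0 1 ×ˢ Icc 0 (π / 2)) := by
  unfold W
  refine continuousOn_const.mul (continuousOn_tsum (fun n => by fun_prop)
    (summable_const_div_sq 1) fun n p hp =>
      abs_pow_mul_div_le n hp.1 (Real.abs_sin_le_one _)
        (le_mul_of_one_le_right (mIdx_sq_sub_one_pos n).le ?_))
  rw [mIdx_cast]
  linarith [n.cast_nonneg (α := ℝ)]

theorem continuousOn_Wθ :
    ContinuousOn (fun p : ℝ × ℝ => Wθ p.1 p.2) (Icc 0 1 ×ˢ Icc 0 (π / 2)) := by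
  unfold Wθ
  exact continuousOn_const.mul (continuousOn_tsum (fun n => by fun_prop)
    (summable_const_div_sq 1) fun n p hp =>
      abs_pow_mul_div_le n hp.1 (Real.abs_cos_le_one _) le_rfl)

/-- `W` and `W_θ` are continuous on `D̄₁ = [0,1] × [0,π/2]`; `W_r` extends
continuously to `D̄₁` minus the corners `(1,0)`, `(1,π/2)`, the extension having values
`cos θ + sin θ` on the edge `r = 1`, while `W_r(r,0) = 0` for `r ∈ [0,1)`; and `W_r` has no
extension that is continuous (within `D̄₁`) at either of the two corner points. -/
theorem stmt3 :
    ContinuousOn (fun p : ℝ × ℝ => W p.1 p.2) (Icc 0 1 ×ˢ Icc 0 (π / 2)) ∧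
    ContinuousOn (fun p : ℝ × ℝ => Wθ p.1 p.2) (Icc 0 1 ×ˢ Icc 0 (π / 2)) ∧
    (∃ F : ℝ × ℝ → ℝ,
      ContinuousOn F ((Icc 0 1 ×ˢ Icc 0 (π / 2)) \ {((1 : ℝ), (0 : ℝ)), ((1 : ℝ), π / 2)}) ∧
      (∀ p ∈ (Ico (0 : ℝ) 1) ×ˢ Icc (0 : ℝ) (π / 2), F p = Wr p.1 p.2) ∧
      (∀ θ ∈ Ioo (0 : ℝ) (π / 2), F (1, θ) = Real.cos θ + Real.sin θ)) ∧
    (∀ r ∈ Ico (0 : ℝ) 1, Wr r 0 = 0) ∧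
    (¬ ∃ G : ℝ × ℝ → ℝ,
      ContinuousWithinAt G (Icc 0 1 ×ˢ Icc 0 (π / 2)) ((1 : ℝ), (0 : ℝ)) ∧
      ∀ p ∈ (Ico (0 : ℝ) 1) ×ˢ Icc (0 : ℝ) (π / 2), G p = Wr p.1 p.2) ∧
    (¬ ∃ G : ℝ × ℝ → ℝ,
      ContinuousWithinAt G (Icc 0 1 ×ˢ Icc 0 (π / 2)) ((1 : ℝ), π / 2) ∧
      ∀ p ∈ (Ico (0 : ℝ) 1) ×ˢ Icc (0 : ℝ) (π / 2), G p = Wr p.1 p.2) := by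
  refine ⟨continuousOn_W, continuousOn_Wθ, ⟨WrExt, ?_, fun p hp => if_pos hp.1.2,
    fun θ _ => if_neg (lt_irrefl _)⟩, fun r _ => Wr_zero r,
    no_extension_at_corner (left_mem_Icc.2 (by positivity)) Wr_zero,
    no_extension_at_corner (right_mem_Icc.2 (by positivity)) Wr_pi_div_two⟩
  rintro ⟨r, θ⟩ ⟨⟨hr, hθ⟩, hne⟩
  simp only [mem_insert_iff, mem_singleton_iff, Prod.mk.injEq, not_or, not_and] at hne
  have hsub : (Icc 0 1 ×ˢ Icc 0 (π / 2)) \ {((1 : ℝ), (0 : ℝ)), ((1 : ℝ), π / 2)} ⊆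
      Icc (0 : ℝ) 1 ×ˢ (univ : Set ℝ) := fun p hp => ⟨hp.1.1, mem_univ _⟩
  rcases hr.2.lt_or_eq with h | h
  · exact (continuousWithinAt_WrExt_of_lt ⟨hr.1, h⟩ θ).mono hsub
  · exact (continuousWithinAt_WrExt hr
      ⟨hθ.1.lt_of_ne' (hne.1 h), hθ.2.lt_of_ne (hne.2 h)⟩).mono hsub
end
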